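/- arXiv:2407.11538 — 11 statements merged into one kernel-verified Lean document; each statement's English description precedes it below -/
import Mathlib

section
/- For every topological space X, the ultrafilter space 𝔘X is a Salbany space; more precisely, 𝔘X is compact, locally compact, stable, and weakly sober. -/
/-!
`𝔘X` is a coarsening of the Stone topology on ultrafilters, which is compact, and each basic open
set `O*` is clopen in the Stone topology. Compactness arguments can therefore be run in the Stone
topology and pushed down: the `O*` and their pairwise intersections are compact, so `𝔘X` is a
compact, quasi-separated space with a basis of compact open sets; and for an irreducible closed set
`S` the sets `S` and `O*`, over the basic open sets `O*` meeting `S`, have the finite intersection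
property, so they share a point, which is generic in `S`. Stability follows because `O ≪ U`
interpolates through a compact open set.
-/

open Set

/-- The ultrafilter space of a topological space: the set of ultrafilters on `X`,
topologised by the sets `O* = {F | O ∈ F}` for `O` open in `X`. -/
def UltraSpace (X : Type u) : Type u := Ultrafilter X

instance {X : Type u} : Membership (Set X) (UltraSpace X) :=
  inferInstanceAs (Membership (Set X) (Ultrafilter X))

instance UltraSpace.instTopologicalSpace {X : Type u} [TopologicalSpace X] :
    TopologicalSpace (UltraSpace X) :=
  TopologicalSpace.generateFrom
    {s : Set (UltraSpace X) | ∃ O : Set X, IsOpen O ∧ s = {F : UltraSpace X | O ∈ F}}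

/-- The unit `η_X : X → 𝔘X`, sending a point to the principal ultrafilter at it. -/
def UltraSpace.pureU {X : Type u} (x : X) : UltraSpace X := (pure x : Ultrafilter X)

/-- The pushforward `𝔘f` of ultrafilters along a map. -/
def UltraSpace.map {X Y : Type*} (f : X → Y) (F : UltraSpace X) : UltraSpace Y :=
  (Ultrafilter.map f (F : Ultrafilter X) : Ultrafilter Y)

/-- `O ≪ U`: every family of open sets covering `U` admits a finite subfamily covering `O`. -/
def RelCpt {X : Type*} [TopologicalSpace X] (O U : Set X) : Prop :=
  ∀ 𝒞 : Set (Set X), (∀ V ∈ 𝒞, IsOpen V) → U ⊆ ⋃₀ 𝒞 →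
    ∃ 𝒟 : Finset (Set X), ↑𝒟 ⊆ 𝒞 ∧ O ⊆ ⋃₀ (𝒟 : Set (Set X))

/-- A space is stable if `X ≪ X` and `≪` is finitely multiplicative on open sets. -/
def IsStable (X : Type*) [TopologicalSpace X] : Prop :=
  RelCpt (Set.univ : Set X) Set.univ ∧
    ∀ O U W V : Set X, IsOpen O → IsOpen U → IsOpen W → IsOpen V →
      RelCpt O U → RelCpt W V → RelCpt (O ∩ W) (U ∩ V)

open TopologicalSpace

section RelativeCompactness

variable {X : Type*} [TopologicalSpace X] {O K U : Set X}

theorem relCpt_of_isCompact_between (hK : IsCompact K) (hOK : O ⊆ K) (hKU : K ⊆ U) :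
    RelCpt O U := by
  intro 𝒞 h𝒞 hU
  obtain ⟨𝒟, h𝒟, h𝒟_fin, hK𝒟⟩ := hK.elim_finite_subcover_image (c := id) h𝒞
    (hKU.trans (sUnion_eq_biUnion ▸ hU))
  lift 𝒟 to Finset (Set X) using h𝒟_fin
  exact ⟨𝒟, h𝒟, hOK.trans (sUnion_eq_biUnion ▸ hK𝒟)⟩

theorem RelCpt.exists_isCompact_isOpen_between [PrespectralSpace X] (hOU : RelCpt O U)
    (hU : IsOpen U) : ∃ K, IsCompact K ∧ IsOpen K ∧ O ⊆ K ∧ K ⊆ U := by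
  let 𝒞 : Set (Set X) := {V | (IsOpen V ∧ IsCompact V) ∧ V ⊆ U}
  have hU𝒞 : U ⊆ ⋃₀ 𝒞 := (PrespectralSpace.isTopologicalBasis.open_eq_sUnion' hU).subset
  obtain ⟨𝒟, h𝒟, hO⟩ := hOU 𝒞 (fun V hV ↦ hV.1.1) hU𝒞
  exact ⟨⋃₀ 𝒟, 𝒟.finite_toSet.isCompact_sUnion fun V hV ↦ (h𝒟 hV).1.2,
    isOpen_sUnion fun V hV ↦ (h𝒟 hV).1.1, hO, sUnion_subset fun V hV ↦ (h𝒟 hV).2⟩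

theorem isStable_of_prespectralSpace [CompactSpace X] [QuasiSeparatedSpace X]
    [PrespectralSpace X] : IsStable X := by
  refine ⟨relCpt_of_isCompact_between isCompact_univ subset_rfl subset_rfl, ?_⟩
  intro O U W V _ hU _ hV hOU hWV
  obtain ⟨K, hK, hK_open, hOK, hKU⟩ := hOU.exists_isCompact_isOpen_between hU
  obtain ⟨L, hL, hL_open, hWL, hLV⟩ := hWV.exists_isCompact_isOpen_between hV
  exact relCpt_of_isCompact_between (hK.inter_of_isOpen hL hK_open hL_open)
    (inter_subset_inter hOK hWL) (inter_subset_inter hKU hLV)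

end RelativeCompactness

section ImageOfCompactSpace

variable {X Y ι : Type*} [TopologicalSpace X] [TopologicalSpace Y] [CompactSpace Y]
  {f : Y → X} {b : ι → Set X}

theorem isCompact_of_isClosed_preimage (hf : Continuous f) (hsurj : f.Surjective) {s : Set X}
    (hs : IsClosed (f ⁻¹' s)) : IsCompact s :=
  image_preimage_eq s hsurj ▸ hs.isCompact.image hf

theorem prespectralSpace_of_isClosed_preimage (hf : Continuous f) (hsurj : f.Surjective)
    (hb : IsTopologicalBasis (range b)) (hclosed : ∀ i, IsClosed (f ⁻¹' b i)) :
    PrespectralSpace X :=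
  .of_isTopologicalBasis' hb fun i ↦ isCompact_of_isClosed_preimage hf hsurj (hclosed i)

theorem quasiSeparatedSpace_of_isClosed_preimage (hf : Continuous f) (hsurj : f.Surjective)
    (hb : IsTopologicalBasis (range b)) (hclosed : ∀ i, IsClosed (f ⁻¹' b i)) :
    QuasiSeparatedSpace X :=
  .of_isTopologicalBasis hb fun i j ↦
    isCompact_of_isClosed_preimage hf hsurj ((hclosed i).inter (hclosed j))

theorem exists_mem_forall_mem_of_isIrreducible (hf : Continuous f) (hsurj : f.Surjective)
    (hb : ∀ i, IsOpen (b i)) (hclosed : ∀ i, IsClosed (f ⁻¹' b i)) {S : Set X}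
    (hS : IsIrreducible S) (hS_closed : IsClosed S) :
    ∃ x ∈ S, ∀ i, (S ∩ b i).Nonempty → x ∈ b i := by
  classical
  let J := {i // (S ∩ b i).Nonempty}
  have finite_inter (t : Finset J) : (f ⁻¹' S ∩ ⋂ j ∈ t, f ⁻¹' b j).Nonempty := by
    obtain ⟨x, hxS, hxt⟩ := isIrreducible_iff_sInter.1 hS (t.image fun j : J ↦ b j)
      (Finset.forall_mem_image.2 fun j _ ↦ hb j) (Finset.forall_mem_image.2 fun j _ ↦ j.2)
    obtain ⟨y, rfl⟩ := hsurj x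
    exact ⟨y, hxS, mem_iInter₂.2 fun j hj ↦ hxt _ (Finset.mem_image_of_mem _ hj)⟩
  obtain ⟨y, hyS, hy⟩ := (hS_closed.preimage hf).isCompact.inter_iInter_nonempty
    (fun j : J ↦ f ⁻¹' b j) (fun j ↦ hclosed j) finite_inter
  exact ⟨f y, hyS, fun i hi ↦ mem_iInter.1 hy ⟨i, hi⟩⟩

theorem quasiSober_of_isClosed_preimage (hf : Continuous f) (hsurj : f.Surjective)
    (hb : IsTopologicalBasis (range b)) (hclosed : ∀ i, IsClosed (f ⁻¹' b i)) :
    QuasiSober X where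
  sober {S} hS hS_closed := by
    obtain ⟨x, hxS, hx⟩ := exists_mem_forall_mem_of_isIrreducible hf hsurj
      (fun i ↦ hb.isOpen (mem_range_self i)) hclosed hS hS_closed
    refine ⟨x, (hS_closed.closure_subset_iff.2 (singleton_subset_iff.2 hxS)).antisymm ?_⟩
    refine fun z hz ↦ hb.mem_closure_iff.2 ?_
    rintro _ ⟨i, rfl⟩ hzi
    exact ⟨x, hx i ⟨z, hz, hzi⟩, rfl⟩

end ImageOfCompactSpace

namespace UltraSpace

variable {X : Type*}

/-- The identity map from the set of ultrafilters on `X`, carrying Mathlib's Stone topology, to the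
ultrafilter space `𝔘X`. -/
def ofUltrafilter (F : Ultrafilter X) : UltraSpace X := F

theorem surjective_ofUltrafilter : (ofUltrafilter (X := X)).Surjective := fun F ↦ ⟨F, rfl⟩

variable [TopologicalSpace X]

/-- The basic open set `O*` of the ultrafilter space. -/
def basicOpen (O : Opens X) : Set (UltraSpace X) := {F | (O : Set X) ∈ F}

theorem basicOpen_top : basicOpen (⊤ : Opens X) = univ :=
  eq_univ_of_forall fun F ↦ Filter.univ_mem (f := Ultrafilter.toFilter F)

theorem basicOpen_inf (O U : Opens X) : basicOpen (O ⊓ U) = basicOpen O ∩ basicOpen U :=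
  ext fun F ↦ Filter.inter_mem_iff (f := Ultrafilter.toFilter F)

theorem isTopologicalBasis_range_basicOpen :
    IsTopologicalBasis (range (basicOpen (X := X))) where
  exists_subset_inter := by
    rintro _ ⟨O, rfl⟩ _ ⟨U, rfl⟩ F hF
    rw [← basicOpen_inf] at hF ⊢
    exact ⟨_, mem_range_self _, hF, subset_rfl⟩
  sUnion_eq := eq_univ_of_univ_subset <|
    basicOpen_top (X := X) ▸ subset_sUnion_of_mem (mem_range_self ⊤)
  eq_generateFrom := by
    refine congrArg generateFrom (ext fun s ↦ ?_)
    exact ⟨fun ⟨O, hO, hs⟩ ↦ ⟨⟨O, hO⟩, hs.symm⟩, fun ⟨O, hs⟩ ↦ ⟨O, O.isOpen, hs.symm⟩⟩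

theorem isClosed_preimage_basicOpen (O : Opens X) : IsClosed (ofUltrafilter ⁻¹' basicOpen O) :=
  ultrafilter_isClosed_basic (O : Set X)

theorem continuous_ofUltrafilter : Continuous (ofUltrafilter (X := X)) :=
  isTopologicalBasis_range_basicOpen.continuous_iff.2 <|
    forall_mem_range.2 fun O ↦ ultrafilter_isOpen_basic (O : Set X)

instance : CompactSpace (UltraSpace X) :=
  surjective_ofUltrafilter.compactSpace continuous_ofUltrafilter

instance : PrespectralSpace (UltraSpace X) :=
  prespectralSpace_of_isClosed_preimage continuous_ofUltrafilter surjective_ofUltrafilter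
    isTopologicalBasis_range_basicOpen isClosed_preimage_basicOpen

instance : QuasiSeparatedSpace (UltraSpace X) :=
  quasiSeparatedSpace_of_isClosed_preimage continuous_ofUltrafilter surjective_ofUltrafilter
    isTopologicalBasis_range_basicOpen isClosed_preimage_basicOpen

instance : QuasiSober (UltraSpace X) :=
  quasiSober_of_isClosed_preimage continuous_ofUltrafilter surjective_ofUltrafilter
    isTopologicalBasis_range_basicOpen isClosed_preimage_basicOpen

end UltraSpace

/-- for every topological space `X`, the ultrafilter space `𝔘X` is compact,
locally compact, stable and weakly sober (quasi-sober); in particular it is a Salbany space. -/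
theorem stmt1 (X : Type u) [TopologicalSpace X] :
    CompactSpace (UltraSpace X) ∧ LocallyCompactSpace (UltraSpace X) ∧
      IsStable (UltraSpace X) ∧ QuasiSober (UltraSpace X) :=
  ⟨inferInstance, inferInstance, isStable_of_prespectralSpace, inferInstance⟩
end

section
/- A topological space X is a Salbany space (i.e., locally compact, stable, and weakly sober) if and only if the embedding η_X : X → 𝔘X, x ↦ pure x, admits a continuous retraction, i.e., there exists a continuous map r : 𝔘X → X with r(pure x) = x for all x ∈ X. -/
open Set

/-- A Salbany space: locally compact, stable and weakly sober (quasi-sober). -/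
def IsSalbany (X : Type*) [TopologicalSpace X] : Prop :=
  LocallyCompactSpace X ∧ IsStable X ∧ QuasiSober X

/-!
A continuous retraction `r` of `η` is a choice of generic limits: an ultrafilter `F` converges to
`x` if and only if `r F ⤳ x`. Indeed, `F` converges to `x` if and only if `F ⤳ η x` in `𝔘X`, and
`F` is a limit in `𝔘X` of its own image under `η`. Conversely, if `X` is locally compact then every
choice of generic limits is continuous.

Since `O ≪ U` means that every ultrafilter containing `O` has a limit in `U`, stability and local
compactness make the limit sets of ultrafilters irreducible, and weak sobriety then provides generic
limits. Conversely, generic limits give stability, and also weak sobriety because an irreducible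
closed set is the limit set of some ultrafilter; local compactness passes from `𝔘X` to its retract
`X`.
-/

open Filter Topology

theorem locallyCompactSpace_of_leftInverse {X Y : Type*} [TopologicalSpace X] [TopologicalSpace Y]
    [LocallyCompactSpace Y] {s : X → Y} {r : Y → X} (hs : Continuous s) (hr : Continuous r)
    (hrs : Function.LeftInverse r s) : LocallyCompactSpace X where
  local_compact_nhds x N hN := by
    have hrN : r ⁻¹' N ∈ 𝓝 (s x) := hr.continuousAt.preimage_mem_nhds (by rwa [hrs x])
    obtain ⟨K, hKx, hKN, hK⟩ := local_compact_nhds hrN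
    refine ⟨r '' K, mem_of_superset (hs.continuousAt.preimage_mem_nhds hKx) ?_,
      image_subset_iff.2 hKN, hK.image hr⟩
    exact fun y hy => ⟨s y, hy, hrs y⟩

section LimitSet

variable {X : Type*} [TopologicalSpace X]

/-- The set of limits of an ultrafilter. As `X` need not be Hausdorff, it may have many elements. -/
def limitSet (F : Ultrafilter X) : Set X := {x | (F : Filter X) ≤ 𝓝 x}

theorem isClosed_limitSet (F : Ultrafilter X) : IsClosed (limitSet F) := by
  simpa only [limitSet, ← Ultrafilter.clusterPt_iff] using isClosed_setOfPred_clusterPt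

theorem isGenericPoint_limitSet_pure (x : X) : IsGenericPoint x (limitSet (pure x)) :=
  isGenericPoint_iff_specializes.2 fun _ => specializes_iff_pure

theorem relCpt_iff_ultrafilter {O U : Set X} :
    RelCpt O U ↔ ∀ F : Ultrafilter X, O ∈ F → (U ∩ limitSet F).Nonempty := by
  constructor
  · intro hOU F hOF
    by_contra hlim
    have hcover : U ⊆ ⋃₀ {V | IsOpen V ∧ V ∉ F} := by
      intro x hx
      by_contra hxcover
      refine hlim ⟨x, hx, (nhds_basis_opens x).ge_iff.2 fun V ⟨hxV, hVopen⟩ => ?_⟩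
      by_contra hVF
      exact hxcover ⟨V, ⟨hVopen, hVF⟩, hxV⟩
    obtain ⟨𝒟, h𝒟, hO𝒟⟩ := hOU _ (fun _ hV => hV.1) hcover
    obtain ⟨V, hV, hVF⟩ :=
      (Ultrafilter.finite_sUnion_mem_iff 𝒟.finite_toSet).1 (mem_of_superset hOF hO𝒟)
    exact (h𝒟 hV).2 hVF
  · intro hlim 𝒞 h𝒞 hU𝒞
    -- Pass to a finite subcover of the clopen set `{F | O ∈ F}` of the Stone–Čech compactification
    -- of discrete `X`, and restrict it to principal ultrafilters.
    have hcover : {F : Ultrafilter X | O ∈ F} ⊆ ⋃ V ∈ 𝒞, {F | V ∈ F} := by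
      intro F hOF
      obtain ⟨x, hxU, hFx⟩ := hlim F hOF
      obtain ⟨V, hV, hxV⟩ := hU𝒞 hxU
      exact mem_biUnion hV (hFx ((h𝒞 V hV).mem_nhds hxV))
    obtain ⟨𝒟, h𝒟, hfin, hO𝒟⟩ := (ultrafilter_isClosed_basic O).isCompact.elim_finite_subcover_image
      (fun V _ => ultrafilter_isOpen_basic V) hcover
    refine ⟨hfin.toFinset, by simpa using h𝒟, fun x hx => ?_⟩
    obtain ⟨V, hV, hxV⟩ := mem_iUnion₂.1 (@hO𝒟 (pure x) hx)
    exact ⟨V, hfin.mem_toFinset.2 hV, hxV⟩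

theorem exists_isOpen_mem_relCpt [LocallyCompactSpace X] {U : Set X} (hU : IsOpen U) {x : X}
    (hx : x ∈ U) : ∃ O, IsOpen O ∧ x ∈ O ∧ RelCpt O U := by
  obtain ⟨K, hK, hxK, hKU⟩ := exists_compact_subset hU hx
  refine ⟨interior K, isOpen_interior, hxK, relCpt_iff_ultrafilter.2 fun F hF => ?_⟩
  obtain ⟨y, hyK, hFy⟩ :=
    hK.ultrafilter_le_nhds F (le_principal_iff.2 (mem_of_superset hF interior_subset))
  exact ⟨y, hKU hyK, hFy⟩

theorem isIrreducible_limitSet [LocallyCompactSpace X] (hX : IsStable X) (F : Ultrafilter X) :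
    IsIrreducible (limitSet F) := by
  constructor
  · exact (relCpt_iff_ultrafilter.1 hX.1 F univ_mem).right
  · rintro U V hU hV ⟨x, hFx, hxU⟩ ⟨y, hFy, hyV⟩
    obtain ⟨O, hO, hxO, hOU⟩ := exists_isOpen_mem_relCpt hU hxU
    obtain ⟨W, hW, hyW, hWV⟩ := exists_isOpen_mem_relCpt hV hyV
    have hOW : O ∩ W ∈ F := inter_mem (hFx (hO.mem_nhds hxO)) (hFy (hW.mem_nhds hyW))
    rw [inter_comm]
    exact relCpt_iff_ultrafilter.1 (hX.2 O U W V hO hU hW hV hOU hWV) F hOW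

theorem exists_ultrafilter_mem_subset_limitSet {C : Set X} (hC : IsIrreducible C) :
    ∃ F : Ultrafilter X, C ∈ F ∧ C ⊆ limitSet F := by
  classical
  obtain ⟨F, hF⟩ := Ultrafilter.exists_ultrafilter_of_finite_inter_nonempty
    (insert C {U | IsOpen U ∧ (C ∩ U).Nonempty}) fun T hT => by
      have hopen : ∀ U ∈ T.erase C, IsOpen U ∧ (C ∩ U).Nonempty := fun U hU =>
        (hT (Finset.mem_of_mem_erase hU)).resolve_left (Finset.ne_of_mem_erase hU)
      refine (isIrreducible_iff_sInter.1 hC (T.erase C) (fun U hU => (hopen U hU).1)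
        fun U hU => (hopen U hU).2).mono ?_
      rw [← sInter_insert, ← Finset.coe_insert]
      exact sInter_subset_sInter (Finset.coe_subset.2 (Finset.insert_erase_subset C T))
  refine ⟨F, hF (mem_insert _ _), fun x hx => (nhds_basis_opens x).ge_iff.2 ?_⟩
  exact fun U ⟨hxU, hU⟩ => hF (mem_insert_of_mem _ ⟨hU, x, hx, hxU⟩)

end LimitSet

namespace UltraSpace

variable {X : Type*} [TopologicalSpace X]

theorem isTopologicalBasis_setOf_mem : TopologicalSpace.IsTopologicalBasis
    {s : Set (UltraSpace X) | ∃ O : Set X, IsOpen O ∧ s = {F : UltraSpace X | O ∈ F}} := by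
  refine TopologicalSpace.isTopologicalBasis_of_subbasis_of_finiteInter rfl ⟨?_, ?_⟩
  · exact ⟨univ, isOpen_univ, (eq_univ_of_forall fun F : Ultrafilter X => univ_mem' mem_univ).symm⟩
  · rintro _ ⟨O, hO, rfl⟩ _ ⟨W, hW, rfl⟩
    exact ⟨O ∩ W, hO.inter hW, ext fun F => (inter_mem_iff (f := Ultrafilter.toFilter F)).symm⟩

theorem nhds_hasBasis (F : UltraSpace X) :
    (𝓝 F).HasBasis (fun O : Set X => IsOpen O ∧ O ∈ F) fun O => {G | O ∈ G} := by
  refine isTopologicalBasis_setOf_mem.nhds_hasBasis.to_hasBasis ?_ ?_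
  · rintro _ ⟨⟨O, hO, rfl⟩, hFO⟩
    exact ⟨O, ⟨hO, hFO⟩, Subset.rfl⟩
  · exact fun O ⟨hO, hFO⟩ => ⟨_, ⟨⟨O, hO, rfl⟩, hFO⟩, Subset.rfl⟩

theorem isCompact_setOf_mem (O : Set X) : IsCompact {F : UltraSpace X | O ∈ F} := by
  -- The Stone–Čech topology of `Ultrafilter X` is finer than the topology of `𝔘X`.
  let ι : Ultrafilter X → UltraSpace X := id
  have hι : Continuous ι := by
    refine continuous_generateFrom_iff.2 ?_
    rintro _ ⟨O, -, rfl⟩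
    exact ultrafilter_isOpen_basic O
  have himage : ι '' {F | O ∈ F} = {F : UltraSpace X | O ∈ F} := image_id _
  exact himage ▸ (ultrafilter_isClosed_basic O).isCompact.image hι

instance : LocallyCompactSpace (UltraSpace X) :=
  .of_hasBasis nhds_hasBasis fun _ O _ => isCompact_setOf_mem O

theorem continuous_pureU : Continuous (pureU : X → UltraSpace X) := by
  refine continuous_generateFrom_iff.2 ?_
  rintro _ ⟨O, hO, rfl⟩
  exact hO

theorem tendsto_pureU (F : UltraSpace X) : Tendsto pureU (Ultrafilter.toFilter F) (𝓝 F) :=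
  (nhds_hasBasis F).tendsto_right_iff.2 fun _ hO => hO.2

theorem specializes_pureU_iff {F : UltraSpace X} {x : X} :
    F ⤳ pureU x ↔ x ∈ limitSet F := by
  constructor
  · refine fun h => (nhds_basis_opens x).ge_iff.2 fun O ⟨hxO, hO⟩ => ?_
    have hFO : F ∈ {G | O ∈ G} :=
      mem_of_mem_nhds (h ((nhds_hasBasis (pureU x)).mem_of_mem ⟨hO, hxO⟩))
    exact hFO
  · exact fun hFx => (nhds_hasBasis (pureU x)).ge_iff.2 fun O ⟨hO, hxO⟩ =>
      (nhds_hasBasis F).mem_of_mem ⟨hO, hFx (hO.mem_nhds hxO)⟩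

end UltraSpace

/-- A choice of a generic limit of every ultrafilter: a map `r` such that the limits of `F` are
exactly the specializations of `r F`. -/
def IsLimitMap {X : Type*} [TopologicalSpace X] (r : UltraSpace X → X) : Prop :=
  ∀ F : UltraSpace X, IsGenericPoint (r F) (limitSet F)

theorem exists_isLimitMap_pureU_eq {X : Type*} [TopologicalSpace X] (hX : IsSalbany X) :
    ∃ r : UltraSpace X → X, IsLimitMap r ∧ ∀ x, r (UltraSpace.pureU x) = x := by
  obtain ⟨_, hstable, _⟩ := hX
  have hgeneric (F : UltraSpace X) : ∃ y, IsGenericPoint y (limitSet F) ∧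
      ∀ x, UltraSpace.pureU x = F → y = x := by
    -- Generic points need not be unique, so at `pure x` the point `x` itself has to be chosen.
    by_cases hF : ∃ x, UltraSpace.pureU x = F
    · obtain ⟨x, rfl⟩ := hF
      exact ⟨x, isGenericPoint_limitSet_pure x, fun _ h => (Ultrafilter.pure_injective h).symm⟩
    · obtain ⟨y, hy⟩ := QuasiSober.sober (isIrreducible_limitSet hstable F) (isClosed_limitSet F)
      exact ⟨y, hy, fun x hx => (hF ⟨x, hx⟩).elim⟩
  choose r hr hrpure using hgeneric
  exact ⟨r, hr, fun x => hrpure _ x rfl⟩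

namespace IsLimitMap

variable {X : Type*} [TopologicalSpace X] {r : UltraSpace X → X}

theorem mem_of_isOpen (hr : IsLimitMap r) {F : UltraSpace X} {U : Set X} (hU : IsOpen U)
    (h : (U ∩ limitSet F).Nonempty) : r F ∈ U := by
  obtain ⟨x, hxU, hFx⟩ := h
  exact ((hr F).specializes hFx).mem_open hU hxU

theorem continuous [LocallyCompactSpace X] (hr : IsLimitMap r) : Continuous r := by
  refine continuous_iff_continuousAt.2 fun F => ?_
  refine ((UltraSpace.nhds_hasBasis F).tendsto_iff (nhds_basis_opens (r F))).2 ?_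
  rintro U ⟨hFU, hU⟩
  obtain ⟨O, hO, hFO, hOU⟩ := exists_isOpen_mem_relCpt hU hFU
  refine ⟨O, ⟨hO, (hr F).mem (hO.mem_nhds hFO)⟩, fun G hOG => ?_⟩
  exact hr.mem_of_isOpen hU (relCpt_iff_ultrafilter.1 hOU G hOG)

theorem of_continuous (hcont : Continuous r)
    (hrpure : Function.LeftInverse r UltraSpace.pureU) : IsLimitMap r := by
  have hlim (F : UltraSpace X) : r F ∈ limitSet F := by
    have h := (hcont.tendsto F).comp (UltraSpace.tendsto_pureU F)
    rwa [hrpure.comp_eq_id] at h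
  refine fun F => isGenericPoint_iff_specializes.2 fun x =>
    ⟨fun hx => (hlim F).trans hx, fun hFx => ?_⟩
  simpa only [hrpure x] using (UltraSpace.specializes_pureU_iff.2 hFx).map hcont

theorem isStable (hr : IsLimitMap r) : IsStable X := by
  refine ⟨relCpt_iff_ultrafilter.2 fun F _ => ⟨r F, mem_univ _, (hr F).mem⟩, ?_⟩
  intro O U W V _ hU _ hV hOU hWV
  rw [relCpt_iff_ultrafilter] at hOU hWV ⊢
  intro F hF
  have hFU : r F ∈ U := hr.mem_of_isOpen hU (hOU F (mem_of_superset hF inter_subset_left))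
  have hFV : r F ∈ V := hr.mem_of_isOpen hV (hWV F (mem_of_superset hF inter_subset_right))
  exact ⟨r F, ⟨hFU, hFV⟩, (hr F).mem⟩

theorem quasiSober (hr : IsLimitMap r) : QuasiSober X where
  sober := by
    intro C hC hCclosed
    obtain ⟨F, hCF, hClim⟩ := exists_ultrafilter_mem_subset_limitSet hC
    have hlimC : limitSet F ⊆ C := fun x hFx => isClosed_iff_ultrafilter.1 hCclosed x F hFx hCF
    exact ⟨r F, hClim.antisymm hlimC ▸ hr F⟩

end IsLimitMap

/-- `X` is a Salbany space iff the embedding `η : X → 𝔘X` admits a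
continuous retraction. -/
theorem stmt2 (X : Type u) [TopologicalSpace X] :
    IsSalbany X ↔
      ∃ r : UltraSpace X → X, Continuous r ∧ ∀ x : X, r (UltraSpace.pureU x) = x := by
  constructor
  · intro hX
    have : LocallyCompactSpace X := hX.1
    obtain ⟨r, hr, hrpure⟩ := exists_isLimitMap_pureU_eq hX
    exact ⟨r, hr.continuous, hrpure⟩
  · rintro ⟨r, hcont, hrpure⟩
    have hr : IsLimitMap r := .of_continuous hcont hrpure
    exact ⟨locallyCompactSpace_of_leftInverse UltraSpace.continuous_pureU hcont hrpure,
      hr.isStable, hr.quasiSober⟩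
end

section
/- Let (X, τ) be a topological space and define α_X : 𝔘X → ΣX by α_X(F) = {O ∈ τ : O ∈ F} (the trace of the ultrafilter F on the open sets). Then: (i) α_X(F) is indeed a prime open filter for every ultrafilter F; (ii) for every open O ⊆ X, α_X⁻¹(O^×) = O*, and hence α_X is continuous; (iii) for every continuous map f : X → Y, the map Σf : ΣX → ΣY defined by Σf(𝒢) = {U open in Y : f⁻¹(U) ∈ 𝒢} is well-defined (sends prime open filters to prime open filters) and satisfies Σf ∘ α_X = α_Y ∘ 𝔘f, where 𝔘f(F) = {B ⊆ Y : f⁻¹(B) ∈ F}. -/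
open Set

/-- A prime open filter on a topological space `X`: a collection of open sets containing
`univ`, not containing `∅`, closed under binary intersections, upward closed among open
sets, and prime. -/
structure PrimeOpenFilter (X : Type u) [TopologicalSpace X] where
  sets : Set (Set X)
  isOpen_mem : ∀ O ∈ sets, IsOpen O
  univ_mem : Set.univ ∈ sets
  empty_not_mem : ∅ ∉ sets
  inter_mem : ∀ O ∈ sets, ∀ U ∈ sets, O ∩ U ∈ sets
  mem_of_subset : ∀ O ∈ sets, ∀ U : Set X, IsOpen U → O ⊆ U → U ∈ sets
  prime : ∀ O U : Set X, IsOpen O → IsOpen U → O ∪ U ∈ sets → O ∈ sets ∨ U ∈ sets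

instance {X : Type u} [TopologicalSpace X] : Membership (Set X) (PrimeOpenFilter X) :=
  ⟨fun G O => O ∈ G.sets⟩

/-- The topology on the set `ΣX` of prime open filters, generated by the sets
`O^× = {𝒢 | O ∈ 𝒢}` for `O` open in `X`. -/
instance PrimeOpenFilter.instTopologicalSpace {X : Type u} [TopologicalSpace X] :
    TopologicalSpace (PrimeOpenFilter X) :=
  TopologicalSpace.generateFrom
    {s : Set (PrimeOpenFilter X) | ∃ O : Set X, IsOpen O ∧ s = {G : PrimeOpenFilter X | O ∈ G}}

theorem UltraSpace.mem_map {X Y : Type*} {f : X → Y} {F : UltraSpace X} {B : Set Y} :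
    B ∈ F.map f ↔ f ⁻¹' B ∈ F :=
  Iff.rfl

section TraceMap

variable {X Y : Type*} [TopologicalSpace X] [TopologicalSpace Y]

namespace PrimeOpenFilter

theorem sets_injective : Function.Injective (sets : PrimeOpenFilter X → Set (Set X)) := by
  rintro ⟨⟩ ⟨⟩ rfl
  rfl

/-- The map `Σf : ΣX → ΣY` induced by a continuous map `f : X → Y`: the open sets whose preimage
under `f` belongs to a given prime open filter. The map `f` is bundled, since its continuity is what
keeps these preimages open. -/
def map (f : C(X, Y)) (G : PrimeOpenFilter X) : PrimeOpenFilter Y where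
  sets := {U | IsOpen U ∧ f ⁻¹' U ∈ G}
  isOpen_mem _ hU := hU.1
  univ_mem := ⟨isOpen_univ, G.univ_mem⟩
  empty_not_mem h := G.empty_not_mem h.2
  inter_mem _ hU _ hV := ⟨hU.1.inter hV.1, G.inter_mem _ hU.2 _ hV.2⟩
  mem_of_subset _ hU _ hV hUV :=
    ⟨hV, G.mem_of_subset _ hU.2 _ (hV.preimage f.continuous) (preimage_mono hUV)⟩
  prime _ _ hU hV hUV :=
    (G.prime _ _ (hU.preimage f.continuous) (hV.preimage f.continuous) hUV.2).imp
      (And.intro hU) (And.intro hV)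

theorem mem_map {f : C(X, Y)} {G : PrimeOpenFilter X} {U : Set Y} :
    U ∈ G.map f ↔ IsOpen U ∧ f ⁻¹' U ∈ G :=
  Iff.rfl

end PrimeOpenFilter

namespace UltraSpace

theorem isOpen_setOf_mem {O : Set X} (hO : IsOpen O) : IsOpen {F : UltraSpace X | O ∈ F} :=
  TopologicalSpace.isOpen_generateFrom_of_mem ⟨O, hO, rfl⟩

/-- The trace map `α_X : 𝔘X → ΣX`, sending an ultrafilter to the prime open filter of its open
members. -/
def trace : UltraSpace X → PrimeOpenFilter X := fun F : Ultrafilter X ↦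
  { sets := {O | IsOpen O ∧ O ∈ F}
    isOpen_mem := fun _ hO ↦ hO.1
    univ_mem := ⟨isOpen_univ, Filter.univ_mem⟩
    empty_not_mem := fun h ↦ F.empty_notMem h.2
    inter_mem := fun _ hO _ hU ↦ ⟨hO.1.inter hU.1, Filter.inter_mem hO.2 hU.2⟩
    mem_of_subset := fun _ hO _ hU hOU ↦ ⟨hU, Filter.mem_of_superset hO.2 hOU⟩
    prime := fun _ _ hO hU hOU ↦
      (Ultrafilter.union_mem_iff.1 hOU.2).imp (And.intro hO) (And.intro hU) }

theorem mem_trace {F : UltraSpace X} {O : Set X} : O ∈ F.trace ↔ IsOpen O ∧ O ∈ F :=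
  Iff.rfl

theorem eq_trace_of_sets_eq {α : UltraSpace X → PrimeOpenFilter X}
    (hα : ∀ F, (α F).sets = {O : Set X | IsOpen O ∧ O ∈ F}) : α = trace :=
  funext fun F ↦ PrimeOpenFilter.sets_injective (hα F)

theorem trace_preimage_setOf_mem {O : Set X} (hO : IsOpen O) :
    trace ⁻¹' {G : PrimeOpenFilter X | O ∈ G} = {F : UltraSpace X | O ∈ F} :=
  Set.ext fun _ ↦ mem_trace.trans (and_iff_right hO)

theorem continuous_trace : Continuous (trace : UltraSpace X → PrimeOpenFilter X) := by
  refine continuous_generateFrom_iff.2 ?_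
  rintro _ ⟨O, hO, rfl⟩
  rw [trace_preimage_setOf_mem hO]
  exact isOpen_setOf_mem hO

theorem map_trace (f : C(X, Y)) (F : UltraSpace X) : F.trace.map f = (F.map f).trace := by
  refine PrimeOpenFilter.sets_injective (Set.ext fun U ↦ ?_)
  calc
    U ∈ F.trace.map f ↔ IsOpen U ∧ IsOpen (f ⁻¹' U) ∧ f ⁻¹' U ∈ F := by
      rw [PrimeOpenFilter.mem_map, mem_trace]
    _ ↔ IsOpen U ∧ f ⁻¹' U ∈ F :=
      and_congr_right fun hU ↦ and_iff_right (hU.preimage f.continuous)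
    _ ↔ U ∈ (F.map f).trace := by rw [mem_trace, mem_map]

end UltraSpace

end TraceMap

/-- the trace map `α_X : 𝔘X → ΣX`, `F ↦ {O open | O ∈ F}`, is well defined,
satisfies `α_X⁻¹(O^×) = O*` (hence is continuous), and for continuous `f : X → Y` the map
`Σf : ΣX → ΣY` is well defined and satisfies `Σf ∘ α_X = α_Y ∘ 𝔘f`. -/
theorem stmt3 {X Y : Type u} [TopologicalSpace X] [TopologicalSpace Y] :
    -- (i) the trace of an ultrafilter on the open sets is a prime open filter
    (∀ F : UltraSpace X, ∃ G : PrimeOpenFilter X,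
      G.sets = {O : Set X | IsOpen O ∧ O ∈ F}) ∧
    -- (ii) for any map realising this trace, α⁻¹(O^×) = O*, and α is continuous
    (∀ alphaX : UltraSpace X → PrimeOpenFilter X,
      (∀ F : UltraSpace X, (alphaX F).sets = {O : Set X | IsOpen O ∧ O ∈ F}) →
      (∀ O : Set X, IsOpen O →
        alphaX ⁻¹' {G : PrimeOpenFilter X | O ∈ G} = {F : UltraSpace X | O ∈ F}) ∧
      Continuous alphaX) ∧
    -- (iii) Σf is well defined and Σf ∘ α_X = α_Y ∘ 𝔘f
    (∀ f : X → Y, Continuous f →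
      (∀ G : PrimeOpenFilter X, ∃ G' : PrimeOpenFilter Y,
        G'.sets = {U : Set Y | IsOpen U ∧ f ⁻¹' U ∈ G}) ∧
      (∀ (Sf : PrimeOpenFilter X → PrimeOpenFilter Y)
          (alphaX : UltraSpace X → PrimeOpenFilter X)
          (alphaY : UltraSpace Y → PrimeOpenFilter Y),
        (∀ G : PrimeOpenFilter X,
          (Sf G).sets = {U : Set Y | IsOpen U ∧ f ⁻¹' U ∈ G}) →
        (∀ F : UltraSpace X, (alphaX F).sets = {O : Set X | IsOpen O ∧ O ∈ F}) →
        (∀ F : UltraSpace Y, (alphaY F).sets = {U : Set Y | IsOpen U ∧ U ∈ F}) →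
        ∀ F : UltraSpace X, Sf (alphaX F) = alphaY (UltraSpace.map f F))) := by
  refine ⟨fun F ↦ ⟨F.trace, rfl⟩, fun alphaX hX ↦ ?_, fun f hf ↦
    ⟨fun G ↦ ⟨G.map ⟨f, hf⟩, rfl⟩, fun Sf alphaX alphaY hSf hX hY F ↦ ?_⟩⟩
  · obtain rfl := UltraSpace.eq_trace_of_sets_eq hX
    exact ⟨fun O hO ↦ UltraSpace.trace_preimage_setOf_mem hO, UltraSpace.continuous_trace⟩
  · obtain rfl := UltraSpace.eq_trace_of_sets_eq hX
    obtain rfl := UltraSpace.eq_trace_of_sets_eq hY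
    calc
      Sf F.trace = F.trace.map ⟨f, hf⟩ := PrimeOpenFilter.sets_injective (hSf F.trace)
      _ = (UltraSpace.map f F).trace := UltraSpace.map_trace ⟨f, hf⟩ F
end

section
/- Let (X, τ) be a topological space. Every prime open filter on X is the trace of an ultrafilter on its open sets: for each prime open filter 𝒢 on X there exists an ultrafilter F on X such that {O ∈ τ : O ∈ F} = 𝒢. -/
/-!
Let `𝒢` be a prime open filter. Since `𝒢` is closed under finite intersections and, by primeness,
the open sets outside `𝒢` are closed under finite unions, the sets `O ∩ Uᶜ` with `O ∈ 𝒢` and `U ∉ 𝒢`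
open form a filter basis. None of them is empty, because `O ⊆ U` would put `U` into `𝒢`. An
ultrafilter containing all of them contains every member of `𝒢` and no other open set.
-/

open Filter Order TopologicalSpace

theorem exists_ultrafilter_separating {α : Type*} {𝒜 ℬ : Set (Set α)}
    (h𝒜 : 𝒜.Nonempty) (h𝒜_dir : DirectedOn (· ≥ ·) 𝒜)
    (hℬ : ℬ.Nonempty) (hℬ_dir : DirectedOn (· ≤ ·) ℬ)
    (h : ∀ A ∈ 𝒜, ∀ B ∈ ℬ, ¬A ⊆ B) :
    ∃ U : Ultrafilter α, (∀ A ∈ 𝒜, A ∈ U) ∧ ∀ B ∈ ℬ, B ∉ U := by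
  have basis_𝒜 : (⨅ A ∈ 𝒜, 𝓟 A).HasBasis (· ∈ 𝒜) id := hasBasis_biInf_principal h𝒜_dir h𝒜
  have basis_ℬ : (⨅ B ∈ ℬ, 𝓟 Bᶜ).HasBasis (· ∈ ℬ) compl :=
    hasBasis_biInf_principal (hℬ_dir.mono fun _ _ hBC ↦ Set.compl_subset_compl.2 hBC) hℬ
  have : NeBot ((⨅ A ∈ 𝒜, 𝓟 A) ⊓ ⨅ B ∈ ℬ, 𝓟 Bᶜ) :=
    (basis_𝒜.inf_basis_neBot_iff basis_ℬ).2 fun A hA B hB ↦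
      Set.inter_compl_nonempty_iff.2 (h A hA B hB)
  obtain ⟨U, hU⟩ := Ultrafilter.exists_le ((⨅ A ∈ 𝒜, 𝓟 A) ⊓ ⨅ B ∈ ℬ, 𝓟 Bᶜ)
  obtain ⟨hU𝒜, hUℬ⟩ := le_inf_iff.1 hU
  exact ⟨U, fun A hA ↦ hU𝒜 (basis_𝒜.mem_of_mem hA),
    fun B hB ↦ Ultrafilter.compl_mem_iff_notMem.1 (hUℬ (basis_ℬ.mem_of_mem hB))⟩

theorem stmt4_general {P X : Type*} [Preorder P] (e : P ↪o Set X) (F : PFilter P)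
    (hF : F.IsPrime) : ∃ U : Ultrafilter X, ∀ a, e a ∈ U ↔ a ∈ F := by
  obtain ⟨U, hU_mem, hU_notMem⟩ := exists_ultrafilter_separating
    (F.nonempty.image e) (F.directed.mono_comp fun _ _ hab ↦ e.monotone hab)
    (hF.compl_ideal.Nonempty.image e)
    (hF.compl_ideal.Directed.mono_comp fun _ _ hab ↦ e.monotone hab) <| by
      rintro _ ⟨a, ha, rfl⟩ _ ⟨b, hb, rfl⟩ hab
      exact hb (PFilter.mem_of_le (e.le_iff_le.1 hab) ha)
  refine ⟨U, fun a ↦ ⟨fun haU ↦ ?_, fun ha ↦ hU_mem _ ⟨a, ha, rfl⟩⟩⟩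
  by_contra ha
  exact hU_notMem _ ⟨a, ha, rfl⟩ haU

namespace PrimeOpenFilter

variable {X : Type*} [TopologicalSpace X] (G : PrimeOpenFilter X)

theorem isPFilter_opens : IsPFilter {O : Opens X | (O : Set X) ∈ G.sets} :=
  .of_def ⟨⊤, G.univ_mem⟩
    (fun O hO U hU ↦ ⟨O ⊓ U, G.inter_mem O hO U hU, inf_le_left, inf_le_right⟩)
    (fun {O U} hOU hO ↦ G.mem_of_subset O hO U U.isOpen hOU)

/-- A prime open filter as an order-theoretic filter in the lattice `Opens X`, where Mathlib's
notion of prime filter is available. -/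
def toPFilter : PFilter (Opens X) := G.isPFilter_opens.toPFilter

theorem isPrime_toPFilter : G.toPFilter.IsPrime where
  compl_ideal :=
    { IsLowerSet := fun _ _ hUO hO hU ↦ hO (PFilter.mem_of_le hUO hU)
      Nonempty := ⟨⊥, G.empty_not_mem⟩
      Directed := fun O hO U hU ↦ ⟨O ⊔ U,
        fun hOU ↦ (G.prime O U O.isOpen U.isOpen hOU).elim hO hU, le_sup_left, le_sup_right⟩ }

theorem mem_sets_iff {O : Set X} : O ∈ G.sets ↔ ∃ hO : IsOpen O, ⟨O, hO⟩ ∈ G.toPFilter :=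
  ⟨fun hO ↦ ⟨G.isOpen_mem O hO, hO⟩, fun ⟨_, hO⟩ ↦ hO⟩

end PrimeOpenFilter

/-- every prime open filter on `X` is the trace of an ultrafilter on the
open sets of `X` (uses the Boolean Ultrafilter Theorem). -/
theorem stmt4 {X : Type u} [TopologicalSpace X] (G : PrimeOpenFilter X) :
    ∃ F : Ultrafilter X, {O : Set X | IsOpen O ∧ O ∈ F} = G.sets := by
  obtain ⟨F, hF⟩ := stmt4_general (.ofMapLEIff ((↑) : Opens X → Set X) fun _ _ ↦ Iff.rfl)
    G.toPFilter G.isPrime_toPFilter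
  exact ⟨F, Set.ext fun O ↦ exists_prop.symm.trans <|
    (exists_congr fun hO ↦ hF ⟨O, hO⟩).trans G.mem_sets_iff.symm⟩
end

section
/- Let C be a category, (R, r) an epireflector on C, and T = (T, μ, η) a monad on C such that for every object X, R(η_X) is an epimorphism in R(C). Let (X, a) be a T-algebra (a : T X ⟶ X with a ∘ η_X = 𝟙 and a ∘ T(a) = a ∘ μ_X). If there is a morphism b : T(R X) ⟶ R X making (R X, b) a T-algebra, then r_X : X → R X is a T-algebra homomorphism, i.e., b ∘ T(r_X) = r_X ∘ a. -/
open CategoryTheory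

/-!
Both composites `X ⟶ T X ⟶ R X` reduce to `r_X`, by unitality of `a` and `b` and naturality of
`η`. So the two maps `T X ⟶ R X` agree after precomposition with `η_X`, hence have the same image
under `R`, because `R(η_X)` is an epimorphism in `R(C)`. Since `r` embeds `R X` into `R (R X)`,
naturality of `r` shows that morphisms into `R X` are determined by their images under `R`.
The last step works for any codomain `Y` with `r_Y` a monomorphism, so that `r_X` may be replaced
by any morphism `X ⟶ Y` between unital algebras.
-/

theorem map_eq_map_of_mono_app {C D : Type*} [Category* C] [Category* D] {F G : C ⥤ D}
    (α : F ⟶ G) {X Y : C} [Mono (α.app Y)] {f g : X ⟶ Y} (h : G.map f = G.map g) :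
    F.map f = F.map g := by
  rw [← cancel_mono (α.app Y), α.naturality, α.naturality, h]

section PointedEndofunctor

variable {C : Type*} [Category* C]

theorem eq_of_comp_eq_of_map_cancel {R : C ⥤ C} (r : 𝟭 C ⟶ R) {A B Y : C} [Mono (r.app Y)]
    {e : A ⟶ B}
    (he : ∀ u v : R.obj B ⟶ R.obj Y, R.map e ≫ u = R.map e ≫ v → u = v)
    {f g : B ⟶ Y} (h : e ≫ f = e ≫ g) : f = g :=
  map_eq_map_of_mono_app r <| he _ _ <| by rw [← R.map_comp, ← R.map_comp, h]

theorem unit_comp_map_comp_eq {T : C ⥤ C} (η : 𝟭 C ⟶ T) {X Y : C} (f : X ⟶ Y)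
    {b : T.obj Y ⟶ Y} (hb : η.app Y ≫ b = 𝟙 Y) : η.app X ≫ T.map f ≫ b = f :=
  calc
    η.app X ≫ T.map f ≫ b = f ≫ η.app Y ≫ b := (η.naturality_assoc f b).symm
    _ = f := by rw [hb, Category.comp_id]

theorem stmt8_general {R : C ⥤ C} (r : 𝟭 C ⟶ R) {T : C ⥤ C} (η : 𝟭 C ⟶ T)
    {X Y : C} [Mono (r.app Y)]
    (hη : ∀ u v : R.obj (T.obj X) ⟶ R.obj Y,
      R.map (η.app X) ≫ u = R.map (η.app X) ≫ v → u = v)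
    {a : T.obj X ⟶ X} (ha : η.app X ≫ a = 𝟙 X)
    {b : T.obj Y ⟶ Y} (hb : η.app Y ≫ b = 𝟙 Y) (f : X ⟶ Y) :
    T.map f ≫ b = a ≫ f := by
  refine eq_of_comp_eq_of_map_cancel r hη ?_
  calc
    η.app X ≫ T.map f ≫ b = f := unit_comp_map_comp_eq η f hb
    _ = η.app X ≫ a ≫ f := by rw [reassoc_of% ha]

end PointedEndofunctor

/-- for an epireflector `(R, r)` and a monad `T` such that `R(η_X)` is epi in
`R(C)`, if `(X, a)` is a `T`-algebra and `R X` carries a `T`-algebra structure `b`, then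
`r_X` is a `T`-algebra homomorphism: `b ∘ T(r_X) = r_X ∘ a`. -/
theorem stmt8 {C : Type u} [Category.{v} C]
    (R : C ⥤ C) (r : 𝟭 C ⟶ R)
    (hRr : ∀ X : C, R.map (r.app X) = r.app (R.obj X))
    (hIso : ∀ X : C, IsIso (r.app (R.obj X)))
    (hEpi : ∀ X : C, Epi (r.app X))
    (T : Monad C)
    (hReta : ∀ (X Y : C) (u v : R.obj (T.obj X) ⟶ R.obj Y),
      R.map (T.η.app X) ≫ u = R.map (T.η.app X) ≫ v → u = v)
    (X : C) (a : T.obj X ⟶ X)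
    (ha₁ : T.η.app X ≫ a = 𝟙 X)
    (ha₂ : T.map a ≫ a = T.μ.app X ≫ a)
    (b : T.obj (R.obj X) ⟶ R.obj X)
    (hb₁ : T.η.app (R.obj X) ≫ b = 𝟙 (R.obj X))
    (hb₂ : T.map b ≫ b = T.μ.app (R.obj X) ≫ b) :
    T.map (r.app X) ≫ b = a ≫ r.app X := by
  have := hIso X
  exact stmt8_general r T.η (hReta X (R.obj X)) ha₁ hb₁ (r.app X)
end

section
/- Let C be a category, (R, r) an epireflector on C, and T = (T, μ, η) a monad on C such that for every object X, R(η_X) is an epimorphism in R(C). Suppose that for each object X, the morphism η_{R(T X)} : R(T X) ⟶ T(R(T X)) is a split monomorphism (admits a retraction, naturally in X, i.e., there is a natural transformation β : T∘(RT) ⟶ RT with β ∘ η(RT) = 𝟙). Then for every T-algebra (X, a), the object R X admits a T-algebra structure: there exists b : T(R X) ⟶ R X such that b ∘ η_{R X} = 𝟙 and b ∘ T(b) = b ∘ μ_{R X}. -/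
open CategoryTheory

/-!
Since `a` exhibits `X` as a retract of `T X`, the object `R X` is a retract of `R (T X)`, so by
naturality `η_{R X}` is a retract of the split monomorphism `η_{R (T X)}` and has a retraction `b`.
Both sides of the associativity law for `b` restrict to `b` along `η_{T (R X)}`, and `η` can be
cancelled against maps into `R X`: apply `R`, cancel there, and use that `r_{R X}` is monic.
-/

section

variable {C : Type*} [Category* C]

lemma isSplitMono_of_retractArrow {X Y Z W : C} {f : X ⟶ Y} {g : Z ⟶ W} (h : RetractArrow f g)
    [IsSplitMono g] : IsSplitMono f :=
  .mk' { retraction := h.i.right ≫ retraction g ≫ h.r.left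
         id := by rw [← h.i_w_assoc, IsSplitMono.id_assoc, h.retract_left] }

lemma map_injective_of_mono_app {R : C ⥤ C} (r : 𝟭 C ⟶ R) (X Y : C) [Mono (r.app Y)] :
    Function.Injective (fun f : X ⟶ Y => R.map f) := by
  intro f g (hfg : R.map f = R.map g)
  have naturality (k : X ⟶ Y) : k ≫ r.app Y = r.app X ≫ R.map k := r.naturality k
  rw [← cancel_mono (r.app Y), naturality, naturality, hfg]

lemma precomp_injective_of_map {R : C ⥤ C} (r : 𝟭 C ⟶ R) {X Y Z : C} [Mono (r.app Z)]
    {f : X ⟶ Y} (hf : Function.Injective (fun u : R.obj Y ⟶ R.obj Z => R.map f ≫ u)) :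
    Function.Injective (fun g : Y ⟶ Z => f ≫ g) := by
  intro g h (hgh : f ≫ g = f ≫ h)
  apply map_injective_of_mono_app r
  apply hf
  simp only [← R.map_comp, hgh]

lemma monad_map_comp_eq_μ_comp_of_η_comp_eq_id {T : Monad C} {X : C} {b : T.obj X ⟶ X}
    (hb : T.η.app X ≫ b = 𝟙 X)
    (hη : Function.Injective (fun u : T.obj (T.obj X) ⟶ X => T.η.app (T.obj X) ≫ u)) :
    T.map b ≫ b = T.μ.app X ≫ b := by
  apply hη
  calc T.η.app (T.obj X) ≫ T.map b ≫ b
      = b ≫ T.η.app X ≫ b := (T.η.naturality_assoc b b).symm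
    _ = b := by rw [hb, Category.comp_id]
    _ = T.η.app (T.obj X) ≫ T.μ.app X ≫ b := (T.left_unit_assoc X b).symm

theorem stmt9_general {R : C ⥤ C} (r : 𝟭 C ⟶ R) (T : Monad C) {X : C} [Mono (r.app (R.obj X))]
    (hη : ∀ (Y Z : C) (u v : R.obj (T.obj Y) ⟶ R.obj Z),
      R.map (T.η.app Y) ≫ u = R.map (T.η.app Y) ≫ v → u = v)
    (hX : IsSplitMono (T.η.app X)) (hRTX : IsSplitMono (T.η.app (R.obj (T.obj X)))) :
    ∃ b : T.obj (R.obj X) ⟶ R.obj X,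
      T.η.app (R.obj X) ≫ b = 𝟙 (R.obj X) ∧
      T.map b ≫ b = T.μ.app (R.obj X) ≫ b := by
  let retract : Retract X (T.obj X) := ⟨T.η.app X, retraction (T.η.app X), IsSplitMono.id _⟩
  have : IsSplitMono (T.η.app (R.obj X)) :=
    isSplitMono_of_retractArrow (NatTrans.retractArrowApp T.η (retract.map R))
  have unit := IsSplitMono.id (T.η.app (R.obj X))
  have η_cancel := precomp_injective_of_map r (Z := R.obj X) (hη (T.obj (R.obj X)) (R.obj X))
  exact ⟨_, unit, monad_map_comp_eq_μ_comp_of_η_comp_eq_id unit η_cancel⟩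

end

/-- for an epireflector `(R, r)` and a monad `T` with `R(η_X)` epi in `R(C)`,
if each `η_{R(T X)}` is naturally split mono (via `β : T∘(RT) ⟶ RT` with `β ∘ η(RT) = 𝟙`),
then for every `T`-algebra `(X, a)` the object `R X` admits a `T`-algebra structure. -/
theorem stmt9 {C : Type u} [Category.{v} C]
    (R : C ⥤ C) (r : 𝟭 C ⟶ R)
    (hRr : ∀ X : C, R.map (r.app X) = r.app (R.obj X))
    (hIso : ∀ X : C, IsIso (r.app (R.obj X)))
    (hEpi : ∀ X : C, Epi (r.app X))
    (T : Monad C)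
    (hReta : ∀ (X Y : C) (u v : R.obj (T.obj X) ⟶ R.obj Y),
      R.map (T.η.app X) ≫ u = R.map (T.η.app X) ≫ v → u = v)
    (β : (T.toFunctor ⋙ R) ⋙ T.toFunctor ⟶ T.toFunctor ⋙ R)
    (hβ : ∀ X : C, T.η.app (R.obj (T.obj X)) ≫ β.app X = 𝟙 (R.obj (T.obj X)))
    (X : C) (a : T.obj X ⟶ X)
    (ha₁ : T.η.app X ≫ a = 𝟙 X)
    (ha₂ : T.map a ≫ a = T.μ.app X ≫ a) :
    ∃ b : T.obj (R.obj X) ⟶ R.obj X,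
      T.η.app (R.obj X) ≫ b = 𝟙 (R.obj X) ∧
      T.map b ≫ b = T.μ.app (R.obj X) ≫ b := by
  exact stmt9_general r T hReta (.mk' ⟨a, ha₁⟩) (.mk' ⟨β.app X, hβ X⟩)
end

section
/- Let C be a category, (R, r) an epireflector on C, and T = (T, μ, η) a monad on C such that for every object X, R(η_X) is an epimorphism in R(C), and such that there is a natural transformation β : T∘(RT) ⟶ RT with β ∘ η(RT) = 𝟙 (each η_{R(T X)} is naturally split mono). Then the composite functor X ↦ R(T X) underlies a monad on C whose unit has components r_{T X} ∘ η_X, and such that the natural transformation with components r_{T X} : T X ⟶ R(T X) is a morphism of monads from T to this composite monad. -/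
open CategoryTheory

/-!
A reflector is the same thing as an idempotent monad, so it suffices to show that the composite
`T ⋙ R`, pointed by `η ≫ rT`, is again a reflector. A pointed endofunctor `(S, u)` is a reflector as
soon as morphisms `S X ⟶ S Y` are determined by their restriction along `u` and each `u_{S X}` is
split mono. For `S = T ⋙ R` the first condition holds because `R η` is epi in `R(C)`, and the second
because a retraction of `η_{R T X}` extends along `r`. Finally, both sides of the compatibility of
`rT` with multiplications restrict to `r_{T X}` along `η_{T X}`, so they agree.
-/

section

universe v₁ u₁

variable {C : Type u₁} [Category.{v₁} C] {R F : C ⥤ C} {r : 𝟭 C ⟶ R}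

/-- A pointed endofunctor `(R, r)` is a reflector if `R r = r R` and this transformation is
invertible; it is then the reflection onto the full subcategory `R(C)` of objects at which `r` is
invertible. -/
structure IsReflector (r : 𝟭 C ⟶ R) : Prop where
  map_app (X : C) : R.map (r.app X) = r.app (R.obj X)
  isIso_app (X : C) : IsIso (r.app (R.obj X))

/-- `R i` is an epimorphism in the subcategory `R(C)` of a reflector `R`. Only the objects `R Y` are
tested, as every object of `R(C)` is isomorphic to one of these. -/
def IsReflectedEpi (R : C ⥤ C) {A B : C} (i : A ⟶ B) : Prop :=
  ∀ (Y : C) (f g : R.obj B ⟶ R.obj Y), R.map i ≫ f = R.map i ≫ g → f = g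

namespace IsReflector

lemma of_hom_ext_of_isSplitMono
    (hext : ∀ ⦃X Y : C⦄ ⦃f g : R.obj X ⟶ R.obj Y⦄, r.app X ≫ f = r.app X ≫ g → f = g)
    (hsplit : ∀ X : C, IsSplitMono (r.app (R.obj X))) : IsReflector r where
  map_app X := hext (r.naturality (r.app X)).symm
  isIso_app X :=
    have hid : retraction (r.app (R.obj X)) ≫ r.app (R.obj X) = 𝟙 _ :=
      hext (by rw [IsSplitMono.id_assoc, Category.comp_id])
    ⟨retraction (r.app (R.obj X)), IsSplitMono.id _, hid⟩

/-- The idempotent monad of a reflector: its multiplication is the inverse of `r R`. -/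
noncomputable def monad (hr : IsReflector r) : Monad C where
  toFunctor := R
  η := r
  μ :=
    { app X :=
        have := hr.isIso_app X
        inv (r.app (R.obj X))
      naturality _ _ _ := by
        have := hr.isIso_app
        simp }
  left_unit X := by
    have := hr.isIso_app X
    simp
  right_unit X := by
    have := hr.isIso_app X
    simp [hr.map_app]
  assoc X := by
    have := hr.isIso_app
    simp [hr.map_app]

lemma hom_ext_of_isReflectedEpi (hr : IsReflector r) {A B Y : C} {i : A ⟶ B}
    (hi : IsReflectedEpi R i) {f g : B ⟶ R.obj Y} (h : i ≫ f = i ≫ g) : f = g := by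
  have := hr.isIso_app Y
  have hmap : R.map f = R.map g := hi _ _ _ (by rw [← R.map_comp, h, R.map_comp])
  rw [← cancel_mono (r.app (R.obj Y))]
  calc f ≫ r.app (R.obj Y) = r.app B ≫ R.map f := r.naturality f
    _ = r.app B ≫ R.map g := by rw [hmap]
    _ = g ≫ r.app (R.obj Y) := (r.naturality g).symm

lemma isReflectedEpi_app (hr : IsReflector r) (X : C) : IsReflectedEpi R (r.app X) := by
  intro Y f g h
  have := hr.isIso_app X
  rwa [hr.map_app, cancel_epi] at h

lemma exists_fac (hr : IsReflector r) {X Y : C} (f : X ⟶ R.obj Y) :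
    ∃ g : R.obj X ⟶ R.obj Y, r.app X ≫ g = f := by
  have := hr.isIso_app Y
  exact ⟨R.map f ≫ inv (r.app (R.obj Y)), by simp [← r.naturality_assoc]⟩

lemma comp_whiskerLeft (hr : IsReflector r) {η : 𝟭 C ⟶ F}
    (hη : ∀ X : C, IsReflectedEpi R (η.app X))
    (hsplit : ∀ X : C, IsSplitMono (η.app (R.obj (F.obj X)))) :
    IsReflector (R := F ⋙ R) (η ≫ Functor.whiskerLeft F r) := by
  refine of_hom_ext_of_isSplitMono (fun X Y f g h => ?_) fun X => ?_
  · have hF : r.app (F.obj X) ≫ f = r.app (F.obj X) ≫ g :=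
      hr.hom_ext_of_isReflectedEpi (hη X) (by simpa using h)
    exact hr.hom_ext_of_isReflectedEpi (hr.isReflectedEpi_app _) hF
  · obtain ⟨ρ, hρ⟩ := hr.exists_fac (retraction (η.app (R.obj (F.obj X))))
    exact ⟨⟨ρ, by simp [hρ]⟩⟩

/-- The canonical morphism from `T` to the monad on `T ⋙ R`, with components `r_{T X}`. -/
noncomputable def toCompMonad (hr : IsReflector r) (T : Monad C)
    (hη : ∀ X : C, IsReflectedEpi R (T.η.app X))
    (hsplit : ∀ X : C, IsSplitMono (T.η.app (R.obj (T.obj X)))) :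
    T ⟶ (hr.comp_whiskerLeft hη hsplit).monad where
  app X := r.app (T.obj X)
  naturality _ _ f := r.naturality (T.map f)
  app_η _ := rfl
  app_μ X := by
    let m : R.obj (T.obj (R.obj (T.obj X))) ⟶ R.obj (T.obj X) :=
      (hr.comp_whiskerLeft hη hsplit).monad.μ.app X
    have hunit : T.η.app (R.obj (T.obj X)) ≫ r.app (T.obj (R.obj (T.obj X))) ≫ m = 𝟙 _ :=
      (Category.assoc _ _ _).symm.trans ((hr.comp_whiskerLeft hη hsplit).monad.left_unit X)
    refine hr.hom_ext_of_isReflectedEpi (hη (T.obj X)) ?_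
    calc T.η.app (T.obj X) ≫ T.μ.app X ≫ r.app (T.obj X)
      _ = r.app (T.obj X) := T.left_unit_assoc X _
      _ = r.app (T.obj X) ≫ T.η.app (R.obj (T.obj X)) ≫ r.app (T.obj (R.obj (T.obj X))) ≫ m := by
        rw [hunit]; exact (Category.comp_id _).symm
      _ = T.η.app (T.obj X) ≫
            (T.map (r.app (T.obj X)) ≫ r.app (T.obj (R.obj (T.obj X)))) ≫ m := by
        rw [Category.assoc]; exact T.unit_naturality_assoc _ _ _

end IsReflector

theorem stmt10_general (hr : IsReflector r) (T : Monad C)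
    (hη : ∀ X : C, IsReflectedEpi R (T.η.app X))
    (hsplit : ∀ X : C, IsSplitMono (T.η.app (R.obj (T.obj X)))) :
    ∃ (hTR : IsReflector (R := T.toFunctor ⋙ R) (T.η ≫ Functor.whiskerLeft T.toFunctor r))
      (α : T ⟶ hTR.monad), ∀ X : C, α.app X = r.app (T.obj X) :=
  ⟨hr.comp_whiskerLeft hη hsplit, hr.toCompMonad T hη hsplit, fun _ => rfl⟩

end

/-- for an epireflector `(R, r)` and a monad `T` with `R(η_X)` epi in `R(C)`
and `η(RT)` naturally split mono, the composite functor `R∘T` underlies a monad whose unit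
has components `r_{T X} ∘ η_X`, and `rT` is a morphism of monads into it. -/
theorem stmt10 {C : Type u} [Category.{v} C]
    (R : C ⥤ C) (r : 𝟭 C ⟶ R)
    (hRr : ∀ X : C, R.map (r.app X) = r.app (R.obj X))
    (hIso : ∀ X : C, IsIso (r.app (R.obj X)))
    (hEpi : ∀ X : C, Epi (r.app X))
    (T : Monad C)
    (hReta : ∀ (X Y : C) (u v : R.obj (T.obj X) ⟶ R.obj Y),
      R.map (T.η.app X) ≫ u = R.map (T.η.app X) ≫ v → u = v)
    (β : (T.toFunctor ⋙ R) ⋙ T.toFunctor ⟶ T.toFunctor ⋙ R)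
    (hβ : ∀ X : C, T.η.app (R.obj (T.obj X)) ≫ β.app X = 𝟙 (R.obj (T.obj X))) :
    ∃ (u : 𝟭 C ⟶ T.toFunctor ⋙ R)
      (w : (T.toFunctor ⋙ R) ⋙ (T.toFunctor ⋙ R) ⟶ T.toFunctor ⋙ R),
      -- the unit has components r_{T X} ∘ η_X
      (∀ X : C, u.app X = T.η.app X ≫ r.app (T.obj X)) ∧
      -- monad laws (left unit, right unit, associativity)
      (∀ X : C, u.app (R.obj (T.obj X)) ≫ w.app X = 𝟙 (R.obj (T.obj X))) ∧
      (∀ X : C, (T.toFunctor ⋙ R).map (u.app X) ≫ w.app X = 𝟙 (R.obj (T.obj X))) ∧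
      (∀ X : C, (T.toFunctor ⋙ R).map (w.app X) ≫ w.app X =
        w.app (R.obj (T.obj X)) ≫ w.app X) ∧
      -- rT (with components r_{T X}) is a morphism of monads: it already preserves
      -- units by the clause above, and it preserves multiplications:
      (∀ X : C, T.μ.app X ≫ r.app (T.obj X) =
        T.map (r.app (T.obj X)) ≫ r.app (T.obj (R.obj (T.obj X))) ≫ w.app X) := by
  obtain ⟨hTR, α, hα⟩ := stmt10_general ⟨hRr, hIso⟩ T hReta fun X => ⟨⟨β.app X, hβ X⟩⟩
  exact ⟨_, hTR.monad.μ, fun _ => rfl, hTR.monad.left_unit, hTR.monad.right_unit, hTR.monad.assoc,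
    fun X => by simp only [← hα]; exact (α.app_μ X).trans (Category.assoc _ _ _)⟩
end

section
/- Let C be a category, (R, r) an epireflector on C, T = (T, μ, η) a monad on C, and let W be a monad on C whose underlying functor is the composite X ↦ R(T X), whose unit has components r_{T X} ∘ η_X, and such that the natural transformation rT with components r_{T X} : T X ⟶ R(T X) is a morphism of monads from T to W. Then for every W-algebra (X, α) (with α : R(T X) ⟶ X), the component r_X : X ⟶ R X is an isomorphism. -/
open CategoryTheory

/-!
The unit law of a `W`-algebra exhibits `X` as a retract of `R (T X)`. By naturality of `r` the
morphism `r_X` is then a retract of the isomorphism `r_{R (T X)}` in the arrow category, and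
retracts of isomorphisms are isomorphisms.
-/

theorem isIso_app_of_retract {C D : Type*} [Category* C] [Category* D] {F G : C ⥤ D}
    (τ : F ⟶ G) {X Y : C} (h : Retract X Y) (hY : IsIso (τ.app Y)) : IsIso (τ.app X) :=
  (MorphismProperty.isomorphisms D).of_retract (NatTrans.retractArrowApp τ h) hY

theorem stmt11_general {C : Type*} [Category* C] (R : C ⥤ C) (r : 𝟭 C ⟶ R)
    (hIso : ∀ X : C, IsIso (r.app (R.obj X))) {X Y : C} (h : Retract X (R.obj Y)) :
    IsIso (r.app X) :=
  isIso_app_of_retract r h (hIso Y)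

/-- for an epireflector `(R, r)` and a monad `T`, if `W` is a monad whose
underlying functor is `X ↦ R(T X)` (given by unit `u` and multiplication `w`), whose unit
has components `r_{T X} ∘ η_X` and for which `rT` is a morphism of monads, then for every
`W`-algebra `(X, α)` the component `r_X : X ⟶ R X` is an isomorphism. -/
theorem stmt11 {C : Type u} [Category.{v} C]
    (R : C ⥤ C) (r : 𝟭 C ⟶ R)
    (hRr : ∀ X : C, R.map (r.app X) = r.app (R.obj X))
    (hIso : ∀ X : C, IsIso (r.app (R.obj X)))
    (hEpi : ∀ X : C, Epi (r.app X))
    (T : Monad C)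
    (u : 𝟭 C ⟶ T.toFunctor ⋙ R)
    (w : (T.toFunctor ⋙ R) ⋙ (T.toFunctor ⋙ R) ⟶ T.toFunctor ⋙ R)
    (hu : ∀ X : C, u.app X = T.η.app X ≫ r.app (T.obj X))
    (hw₁ : ∀ X : C, u.app (R.obj (T.obj X)) ≫ w.app X = 𝟙 (R.obj (T.obj X)))
    (hw₂ : ∀ X : C, (T.toFunctor ⋙ R).map (u.app X) ≫ w.app X = 𝟙 (R.obj (T.obj X)))
    (hw₃ : ∀ X : C, (T.toFunctor ⋙ R).map (w.app X) ≫ w.app X =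
      w.app (R.obj (T.obj X)) ≫ w.app X)
    (hmorph : ∀ X : C, T.μ.app X ≫ r.app (T.obj X) =
      T.map (r.app (T.obj X)) ≫ r.app (T.obj (R.obj (T.obj X))) ≫ w.app X)
    (X : C) (α : R.obj (T.obj X) ⟶ X)
    (hα₁ : u.app X ≫ α = 𝟙 X)
    (hα₂ : (T.toFunctor ⋙ R).map α ≫ α = w.app X ≫ α) :
    IsIso (r.app X) :=
  stmt11_general R r hIso ⟨u.app X, α, hα₁⟩
end

section
/- Let C be a category, (R, r) an epireflector on C, T = (T, μ, η) a monad on C such that for every object X, R(η_X) is an epimorphism in R(C), and let W be a monad on C whose underlying functor is the composite X ↦ R(T X), whose unit has components r_{T X} ∘ η_X, and such that the natural transformation rT with components r_{T X} : T X ⟶ R(T X) is a morphism of monads from T to W. Then W is idempotent: for every W-algebra (X, α), the structure morphism α : R(T X) ⟶ X is an isomorphism with inverse the unit component of W at X; in particular every component of the multiplication of W is an isomorphism. -/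
open CategoryTheory

/-!
By naturality of `r`, the unit of `W` factors as `u_X = r_X ≫ R(η_X)`. Both factors can be cancelled
in front of morphisms into objects of the form `R Y`, hence so can `u_X`. Since `R (T X)` is itself
of this form, a retraction `α` of `u_X` is an inverse:
`u_X ≫ (α ≫ u_X) = u_X = u_X ≫ 𝟙`, and `u_X` cancels.
-/

section

variable {C : Type*} [Category* C]

/-- The epimorphisms relative to `P`: morphisms `f` such that `f ≫ g = f ≫ h` implies `g = h` when
the target of `g` and `h` satisfies `P`. For `P` the objects `R Y`, membership of `R(η_X)` says that
it is an epimorphism in `R(C)`, and the unit of any reflector `R` is a member. -/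
def epimorphismsRelativeTo (P : ObjectProperty C) : MorphismProperty C :=
  fun _ Y f => ∀ ⦃Z : C⦄, P Z → ∀ g h : Y ⟶ Z, f ≫ g = f ≫ h → g = h

lemma epimorphisms_le_epimorphismsRelativeTo (P : ObjectProperty C) :
    MorphismProperty.epimorphisms C ≤ epimorphismsRelativeTo P :=
  fun _ _ f hf _ _ _ _ h => have : Epi f := hf; (cancel_epi f).1 h

instance (P : ObjectProperty C) : (epimorphismsRelativeTo P).IsStableUnderComposition where
  comp_mem _ _ hf hg _ hZ _ _ h := hg hZ _ _ <| hf hZ _ _ <| by simpa only [Category.assoc] using h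

lemma epimorphismsRelativeTo.comp_eq_id_of_comp_eq_id {P : ObjectProperty C} {X Y : C} {f : X ⟶ Y}
    (hf : epimorphismsRelativeTo P f) (hY : P Y) {α : Y ⟶ X} (hα : f ≫ α = 𝟙 X) :
    α ≫ f = 𝟙 Y :=
  hf hY _ _ <| by rw [reassoc_of% hα, Category.comp_id]

lemma epimorphismsRelativeTo.comp_app_of_map {P : ObjectProperty C} {R : C ⥤ C} {r : 𝟭 C ⟶ R}
    {X Y : C} {f : X ⟶ Y} (hr : epimorphismsRelativeTo P (r.app X))
    (hf : epimorphismsRelativeTo P (R.map f)) :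
    epimorphismsRelativeTo P (f ≫ r.app Y) := by
  have factorization : f ≫ r.app Y = r.app X ≫ R.map f := r.naturality f
  rw [factorization]
  exact (epimorphismsRelativeTo P).comp_mem _ _ hr hf

theorem stmt12_general (R : C ⥤ C) (r : 𝟭 C ⟶ R)
    (hr : ∀ X : C, epimorphismsRelativeTo (.ofObj R.obj) (r.app X))
    (T : C ⥤ C) (η : 𝟭 C ⟶ T)
    (hReta : ∀ X : C, epimorphismsRelativeTo (.ofObj R.obj) (R.map (η.app X)))
    (u : 𝟭 C ⟶ T ⋙ R) (hu : ∀ X : C, u.app X = η.app X ≫ r.app (T.obj X))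
    (X : C) (α : R.obj (T.obj X) ⟶ X) (hα : u.app X ≫ α = 𝟙 X) :
    IsIso α ∧ α ≫ u.app X = 𝟙 (R.obj (T.obj X)) := by
  have unit_mem : epimorphismsRelativeTo (.ofObj R.obj) (u.app X) :=
    hu X ▸ (hr X).comp_app_of_map (hReta X)
  have inv : α ≫ u.app X = 𝟙 (R.obj (T.obj X)) :=
    unit_mem.comp_eq_id_of_comp_eq_id (ObjectProperty.ofObj_apply R.obj (T.obj X)) hα
  exact ⟨⟨u.app X, inv, hα⟩, inv⟩

end

/-- with `(R, r)` an epireflector, `T` a monad with `R(η_X)` epi in `R(C)`,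
and `W` a monad with underlying functor `X ↦ R(T X)`, unit `r_{T X} ∘ η_X` and `rT` a
morphism of monads, the monad `W` is idempotent: every `W`-algebra structure morphism is
an isomorphism whose inverse is the unit component, and every component of the
multiplication `w` is an isomorphism. -/
theorem stmt12 {C : Type u} [Category.{v} C]
    (R : C ⥤ C) (r : 𝟭 C ⟶ R)
    (hRr : ∀ X : C, R.map (r.app X) = r.app (R.obj X))
    (hIso : ∀ X : C, IsIso (r.app (R.obj X)))
    (hEpi : ∀ X : C, Epi (r.app X))
    (T : Monad C)
    (hReta : ∀ (X Y : C) (u v : R.obj (T.obj X) ⟶ R.obj Y),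
      R.map (T.η.app X) ≫ u = R.map (T.η.app X) ≫ v → u = v)
    (u : 𝟭 C ⟶ T.toFunctor ⋙ R)
    (w : (T.toFunctor ⋙ R) ⋙ (T.toFunctor ⋙ R) ⟶ T.toFunctor ⋙ R)
    (hu : ∀ X : C, u.app X = T.η.app X ≫ r.app (T.obj X))
    (hw₁ : ∀ X : C, u.app (R.obj (T.obj X)) ≫ w.app X = 𝟙 (R.obj (T.obj X)))
    (hw₂ : ∀ X : C, (T.toFunctor ⋙ R).map (u.app X) ≫ w.app X = 𝟙 (R.obj (T.obj X)))
    (hw₃ : ∀ X : C, (T.toFunctor ⋙ R).map (w.app X) ≫ w.app X =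
      w.app (R.obj (T.obj X)) ≫ w.app X)
    (hmorph : ∀ X : C, T.μ.app X ≫ r.app (T.obj X) =
      T.map (r.app (T.obj X)) ≫ r.app (T.obj (R.obj (T.obj X))) ≫ w.app X) :
    (∀ (X : C) (α : R.obj (T.obj X) ⟶ X),
      u.app X ≫ α = 𝟙 X →
      (T.toFunctor ⋙ R).map α ≫ α = w.app X ≫ α →
      IsIso α ∧ α ≫ u.app X = 𝟙 (R.obj (T.obj X))) ∧
    (∀ X : C, IsIso (w.app X)) := by
  have key := stmt12_general R r (fun X => epimorphisms_le_epimorphismsRelativeTo _ _ (hEpi X))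
    T.toFunctor T.η (fun X _ ⟨Y⟩ => hReta X Y) u hu
  exact ⟨fun X α hα _ => key X α hα, fun X => (key _ (w.app X) (hw₁ X)).1⟩
end

section
/- Let C be a category, (R, r) an epireflector on C, and T = (T, μ, η) a monad on C such that the functor T preserves epimorphisms. Let W be a monad on C whose underlying functor is the composite X ↦ R(T X), whose unit has components r_{T X} ∘ η_X, and such that the natural transformation rT with components r_{T X} : T X ⟶ R(T X) is a morphism of monads from T to W. Let M = (M, n, e) be a monad on C such that for every object X, r_{M X} : M X ⟶ R(M X) is an isomorphism (every M X lies in R(C)). Then for every morphism of monads γ : T ⟶ M there exists a unique morphism of monads λ : W ⟶ M such that λ ∘ rT = γ (componentwise, λ_X ∘ r_{T X} = γ_X for every object X). -/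
open CategoryTheory

/-! Since `r` is epi, a morphism `l` out of `R (T X)` is determined by `r_{T X} ≫ l`, and identities
between such morphisms may be tested after precomposing with `r`. As `r_{M X}` is invertible,
`γ_X` factors through `r_{T X}`, so the factorisations form a natural transformation `l`.
Compatibility with the multiplications is tested on `T r_{T X} ≫ r_{T R T X}`, which is epi because
`T` preserves epimorphisms, and there it becomes the corresponding identity for `γ`. -/

theorem exists_unit_app_comp_eq {C : Type*} [Category* C] {R : C ⥤ C} (r : 𝟭 C ⟶ R)
    {A B : C} [IsIso (r.app B)] (f : A ⟶ B) : ∃ g : R.obj A ⟶ B, r.app A ≫ g = f := by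
  have naturality_f : f ≫ r.app B = r.app A ≫ R.map f := r.naturality f
  exact ⟨R.map f ≫ inv (r.app B), by rw [← Category.assoc, IsIso.comp_inv_eq, naturality_f]⟩

theorem existsUnique_natTrans_of_forall_exists_app_comp_eq {D C : Type*} [Category* D]
    [Category* C] {F G H : D ⥤ C} (p : F ⟶ G) [∀ X, Epi (p.app X)] (γ : F ⟶ H)
    (factors : ∀ X, ∃ g : G.obj X ⟶ H.obj X, p.app X ≫ g = γ.app X) :
    ∃! l : G ⟶ H, ∀ X, p.app X ≫ l.app X = γ.app X := by
  choose g hg using factors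
  have naturality_g {X Y : D} (f : X ⟶ Y) : G.map f ≫ g Y = g X ≫ H.map f := by
    rw [← cancel_epi (p.app X)]
    calc p.app X ≫ G.map f ≫ g Y
        = F.map f ≫ γ.app Y := by rw [← p.naturality_assoc, hg]
      _ = γ.app X ≫ H.map f := γ.naturality f
      _ = p.app X ≫ g X ≫ H.map f := by rw [← hg, Category.assoc]
  refine ⟨{ app := g, naturality := fun _ _ => naturality_g }, hg, fun l hl => ?_⟩
  ext X
  rw [← cancel_epi (p.app X), hl, hg]

section Endofunctors

variable {C : Type*} [Category* C] {T S M : C ⥤ C}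

/-- The natural transformation `rT : T ⟶ T ⋙ R` with components `r_{T X}`, for a pointed
endofunctor `(R, r)`. It is `T.whiskerLeft r` with the domain `T ⋙ 𝟭 C` replaced by `T`. -/
def whiskeredUnit (T : C ⥤ C) {R : C ⥤ C} (r : 𝟭 C ⟶ R) : T ⟶ T ⋙ R where
  app X := r.app (T.obj X)
  naturality _ _ f := r.naturality (T.map f)

/-- The multiplicativity condition `α ∘ μ = ν ∘ (α ∗ α)` in the definition of a morphism of monads,
written out on components. The multiplications `μ` and `ν` are arbitrary natural transformations,
so that the condition makes sense for endofunctors that are not known to be monads. -/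
def IsMultiplicative (μ : T ⋙ T ⟶ T) (ν : S ⋙ S ⟶ S) (α : T ⟶ S) : Prop :=
  ∀ X, μ.app X ≫ α.app X = T.map (α.app X) ≫ α.app (S.obj X) ≫ ν.app X

theorem IsMultiplicative.of_comp {μ : T ⋙ T ⟶ T} {ν : S ⋙ S ⟶ S} {n : M ⋙ M ⟶ M}
    {p : T ⟶ S} {l : S ⟶ M} [∀ X, Epi (p.app X)] [∀ X, Epi (T.map (p.app X))]
    (hp : IsMultiplicative μ ν p) (hpl : IsMultiplicative μ n (p ≫ l)) :
    IsMultiplicative ν n l := by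
  intro X
  rw [← cancel_epi (p.app (S.obj X)), ← cancel_epi (T.map (p.app X))]
  calc T.map (p.app X) ≫ p.app (S.obj X) ≫ ν.app X ≫ l.app X
      = μ.app X ≫ p.app X ≫ l.app X := by
        simpa only [Category.assoc] using (congr($(hp X) ≫ l.app X)).symm
    _ = T.map (p.app X ≫ l.app X) ≫ (p.app (M.obj X) ≫ l.app (M.obj X)) ≫ n.app X := hpl X
    _ = T.map (p.app X) ≫ p.app (S.obj X) ≫ S.map (l.app X) ≫ l.app (M.obj X) ≫ n.app X := by
        simp only [Functor.map_comp, Category.assoc, NatTrans.naturality_assoc]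

theorem stmt14_general {R : C ⥤ C} (r : 𝟭 C ⟶ R) [∀ X, Epi (r.app X)]
    [T.PreservesEpimorphisms] {η : 𝟭 C ⟶ T} {μ : T ⋙ T ⟶ T}
    {u : 𝟭 C ⟶ T ⋙ R} {w : (T ⋙ R) ⋙ (T ⋙ R) ⟶ T ⋙ R}
    (hu : ∀ X, u.app X = η.app X ≫ r.app (T.obj X))
    (hw : IsMultiplicative μ w (whiskeredUnit T r))
    {e : 𝟭 C ⟶ M} {n : M ⋙ M ⟶ M} [∀ X, IsIso (r.app (M.obj X))] (γ : T ⟶ M)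
    (hγη : ∀ X, η.app X ≫ γ.app X = e.app X) (hγμ : IsMultiplicative μ n γ) :
    ∃! l : T ⋙ R ⟶ M, (∀ X, u.app X ≫ l.app X = e.app X) ∧ IsMultiplicative w n l ∧
      ∀ X, r.app (T.obj X) ≫ l.app X = γ.app X := by
  have epi_app (X : C) : Epi ((whiskeredUnit T r).app X) :=
    inferInstanceAs (Epi (r.app (T.obj X)))
  obtain ⟨l, hl, l_unique⟩ := existsUnique_natTrans_of_forall_exists_app_comp_eq
    (whiskeredUnit T r) γ fun X => exists_unit_app_comp_eq r (γ.app X)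
  have comp_l : whiskeredUnit T r ≫ l = γ := by
    ext X
    exact hl X
  refine ⟨l, ⟨fun X => ?_, hw.of_comp (comp_l ▸ hγμ), hl⟩, fun l' hl' => l_unique l' hl'.2.2⟩
  calc u.app X ≫ l.app X = η.app X ≫ r.app (T.obj X) ≫ l.app X := by rw [hu, Category.assoc]
    _ = η.app X ≫ γ.app X := congr(η.app X ≫ $(hl X))
    _ = e.app X := hγη X

end Endofunctors

/-- universality of the separated reflection of a monad.  With `(R, r)` an
epireflector, `T` an epi-preserving monad, `W` the composite monad on `X ↦ R(T X)` (unit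
`r_{T X} ∘ η_X`, `rT` a morphism of monads), and `M` a monad all of whose values lie in
`R(C)`, every morphism of monads `γ : T ⟶ M` factors uniquely through `rT` via a morphism
of monads `λ : W ⟶ M`. -/
theorem stmt14 {C : Type u} [Category.{v} C]
    (R : C ⥤ C) (r : 𝟭 C ⟶ R)
    (hRr : ∀ X : C, R.map (r.app X) = r.app (R.obj X))
    (hIso : ∀ X : C, IsIso (r.app (R.obj X)))
    (hEpi : ∀ X : C, Epi (r.app X))
    (T : Monad C)
    (hT : ∀ {A B : C} (f : A ⟶ B), Epi f → Epi (T.map f))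
    (u : 𝟭 C ⟶ T.toFunctor ⋙ R)
    (w : (T.toFunctor ⋙ R) ⋙ (T.toFunctor ⋙ R) ⟶ T.toFunctor ⋙ R)
    (hu : ∀ X : C, u.app X = T.η.app X ≫ r.app (T.obj X))
    (hw₁ : ∀ X : C, u.app (R.obj (T.obj X)) ≫ w.app X = 𝟙 (R.obj (T.obj X)))
    (hw₂ : ∀ X : C, (T.toFunctor ⋙ R).map (u.app X) ≫ w.app X = 𝟙 (R.obj (T.obj X)))
    (hw₃ : ∀ X : C, (T.toFunctor ⋙ R).map (w.app X) ≫ w.app X =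
      w.app (R.obj (T.obj X)) ≫ w.app X)
    (hmorph : ∀ X : C, T.μ.app X ≫ r.app (T.obj X) =
      T.map (r.app (T.obj X)) ≫ r.app (T.obj (R.obj (T.obj X))) ≫ w.app X)
    (M : Monad C)
    (hM : ∀ X : C, IsIso (r.app (M.obj X)))
    (γ : T.toFunctor ⟶ M.toFunctor)
    (hγη : ∀ X : C, T.η.app X ≫ γ.app X = M.η.app X)
    (hγμ : ∀ X : C, T.μ.app X ≫ γ.app X =
      T.map (γ.app X) ≫ γ.app (M.obj X) ≫ M.μ.app X) :
    ∃! l : T.toFunctor ⋙ R ⟶ M.toFunctor,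
      (∀ X : C, u.app X ≫ l.app X = M.η.app X) ∧
      (∀ X : C, w.app X ≫ l.app X =
        (T.toFunctor ⋙ R).map (l.app X) ≫ l.app (M.obj X) ≫ M.μ.app X) ∧
      (∀ X : C, r.app (T.obj X) ≫ l.app X = γ.app X) := by
  have : T.PreservesEpimorphisms := ⟨fun f => hT f inferInstance⟩
  exact stmt14_general r hu hmorph γ hγη hγμ
end

section
/- Let (X, τ) be a topological space. The map Φ : ΣX → 𝔓X defined by Φ(𝒢) = {C ⊆ X : C closed and X \ C ∉ 𝒢} is well-defined (Φ(𝒢) is a prime closed filter for every prime open filter 𝒢) and is a homeomorphism from the prime open filter space ΣX onto the prime closed filter space 𝔓X, with inverse 𝓕 ↦ {O ∈ τ : X \ O ∉ 𝓕}. -/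
/-- A prime closed filter on a topological space `X`: a collection of closed sets
containing `univ`, not containing `∅`, closed under binary intersections, upward closed
among closed sets, and prime. -/
structure PrimeClosedFilter (X : Type u) [TopologicalSpace X] where
  sets : Set (Set X)
  isClosed_mem : ∀ C ∈ sets, IsClosed C
  univ_mem : Set.univ ∈ sets
  empty_not_mem : ∅ ∉ sets
  inter_mem : ∀ C ∈ sets, ∀ D ∈ sets, C ∩ D ∈ sets
  mem_of_subset : ∀ C ∈ sets, ∀ D : Set X, IsClosed D → C ⊆ D → D ∈ sets
  prime : ∀ C D : Set X, IsClosed C → IsClosed D → C ∪ D ∈ sets → C ∈ sets ∨ D ∈ sets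

/-- The topology on the set `𝔓X` of prime closed filters whose closed sets are generated
(as a basis for closed sets) by the sets `H^× = {𝓕 | H ∈ 𝓕}` for `H` closed in `X`. -/
instance PrimeClosedFilter.instTopologicalSpace {X : Type u} [TopologicalSpace X] :
    TopologicalSpace (PrimeClosedFilter X) :=
  TopologicalSpace.generateFrom
    {s : Set (PrimeClosedFilter X) |
      ∃ H : Set X, IsClosed H ∧ s = {F : PrimeClosedFilter X | H ∈ F.sets}ᶜ}

/-!
The complement of a prime filter in a distributive lattice is a prime ideal, and set complement,
being an anti-isomorphism between the open and the closed sets, turns a prime ideal of the one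
into a prime filter of the other. This gives `Φ` and its inverse by one symmetric construction.
Both are continuous because under `Φ` the subbasic open set `{𝒢 | O ∈ 𝒢}` corresponds to
`{𝓕 | Oᶜ ∈ 𝓕}ᶜ`.
-/

section BooleanAlgebra

variable {α : Type*} [BooleanAlgebra α] {p q : α → Prop} {S : Set α} {a : α}

/-- `S` is a prime filter of the sublattice `{a | p a}`. The sublattice is a bare predicate,
with no closure conditions, so that `IsOpen` and `IsClosed` can be substituted directly. -/
structure IsPrimeFilterOn (p : α → Prop) (S : Set α) : Prop where
  prop_of_mem : ∀ a ∈ S, p a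
  top_mem : ⊤ ∈ S
  bot_notMem : ⊥ ∉ S
  inf_mem : ∀ a ∈ S, ∀ b ∈ S, a ⊓ b ∈ S
  mem_of_le : ∀ a ∈ S, ∀ b, p b → a ≤ b → b ∈ S
  mem_or_mem : ∀ a b, p a → p b → a ⊔ b ∈ S → a ∈ S ∨ b ∈ S

/-- The elements satisfying `q` whose complement lies outside `S`; with `q` the predicate of being
closed this is `Φ`, and with `q` the predicate of being open it is the inverse of `Φ`. -/
def complDual (q : α → Prop) (S : Set α) : Set α :=
  {a | q a ∧ aᶜ ∉ S}

theorem mem_complDual_iff (ha : q a) : a ∈ complDual q S ↔ aᶜ ∉ S :=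
  and_iff_right ha

theorem notMem_complDual_iff (ha : q a) : a ∉ complDual q S ↔ aᶜ ∈ S := by
  rw [mem_complDual_iff ha, not_not]

theorem complDual_complDual (hS : ∀ a ∈ S, p a) (hpq : ∀ a, p a → q aᶜ) :
    complDual p (complDual q S) = S := by
  ext a
  constructor
  · rintro ⟨ha, haS⟩
    rwa [notMem_complDual_iff (hpq a ha), compl_compl] at haS
  · intro ha
    have hpa := hS a ha
    rwa [mem_complDual_iff hpa, notMem_complDual_iff (hpq a hpa), compl_compl]

theorem IsPrimeFilterOn.complDual (hS : IsPrimeFilterOn p S) (hqp : ∀ a, q a → p aᶜ)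
    (hq_top : q ⊤) (hq_inf : ∀ a b, q a → q b → q (a ⊓ b)) :
    IsPrimeFilterOn q (complDual q S) where
  prop_of_mem _ ha := ha.1
  top_mem := ⟨hq_top, compl_top (α := α) ▸ hS.bot_notMem⟩
  bot_notMem h := h.2 (compl_bot (α := α) ▸ hS.top_mem)
  inf_mem := by
    rintro a ⟨ha, haS⟩ b ⟨hb, hbS⟩
    refine ⟨hq_inf a b ha hb, fun hab => ?_⟩
    rw [compl_inf] at hab
    exact (hS.mem_or_mem aᶜ bᶜ (hqp a ha) (hqp b hb) hab).elim haS hbS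
  mem_of_le := by
    rintro a ⟨ha, haS⟩ b hb hab
    exact ⟨hb, fun hbS => haS (hS.mem_of_le bᶜ hbS aᶜ (hqp a ha) (compl_le_compl hab))⟩
  mem_or_mem := by
    rintro a b ha hb ⟨-, hab⟩
    by_contra! h
    rw [notMem_complDual_iff ha, notMem_complDual_iff hb] at h
    exact hab (compl_sup (a := a) ▸ hS.inf_mem aᶜ h.1 bᶜ h.2)

end BooleanAlgebra

attribute [ext] PrimeOpenFilter PrimeClosedFilter

section PrimeFilterSpaces

variable {X : Type*} [TopologicalSpace X]

theorem PrimeOpenFilter.isPrimeFilterOn (G : PrimeOpenFilter X) :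
    IsPrimeFilterOn IsOpen G.sets :=
  ⟨G.isOpen_mem, G.univ_mem, G.empty_not_mem, G.inter_mem, G.mem_of_subset, G.prime⟩

theorem PrimeClosedFilter.isPrimeFilterOn (F : PrimeClosedFilter X) :
    IsPrimeFilterOn IsClosed F.sets :=
  ⟨F.isClosed_mem, F.univ_mem, F.empty_not_mem, F.inter_mem, F.mem_of_subset, F.prime⟩

/-- The map `Φ : ΣX → 𝔓X`. -/
def PrimeOpenFilter.toClosed (G : PrimeOpenFilter X) : PrimeClosedFilter X :=
  have h : IsPrimeFilterOn IsClosed (complDual IsClosed G.sets) :=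
    G.isPrimeFilterOn.complDual (fun _ => isOpen_compl_iff.2) isClosed_univ
      fun _ _ => IsClosed.inter
  ⟨complDual IsClosed G.sets, h.prop_of_mem, h.top_mem, h.bot_notMem, h.inf_mem, h.mem_of_le,
    h.mem_or_mem⟩

/-- The inverse `𝔓X → ΣX` of `Φ`. -/
def PrimeClosedFilter.toOpen (F : PrimeClosedFilter X) : PrimeOpenFilter X :=
  have h : IsPrimeFilterOn IsOpen (complDual IsOpen F.sets) :=
    F.isPrimeFilterOn.complDual (fun _ => isClosed_compl_iff.2) isOpen_univ
      fun _ _ => IsOpen.inter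
  ⟨complDual IsOpen F.sets, h.prop_of_mem, h.top_mem, h.bot_notMem, h.inf_mem, h.mem_of_le,
    h.mem_or_mem⟩

theorem PrimeOpenFilter.toOpen_toClosed (G : PrimeOpenFilter X) : G.toClosed.toOpen = G :=
  PrimeOpenFilter.ext (complDual_complDual G.isOpen_mem fun _ => isClosed_compl_iff.2)

theorem PrimeClosedFilter.toClosed_toOpen (F : PrimeClosedFilter X) : F.toOpen.toClosed = F :=
  PrimeClosedFilter.ext (complDual_complDual F.isClosed_mem fun _ => isOpen_compl_iff.2)

theorem PrimeOpenFilter.isOpen_setOf_mem {O : Set X} (hO : IsOpen O) :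
    IsOpen {G : PrimeOpenFilter X | O ∈ G.sets} :=
  TopologicalSpace.isOpen_generateFrom_of_mem ⟨O, hO, rfl⟩

theorem PrimeClosedFilter.isOpen_setOf_notMem {H : Set X} (hH : IsClosed H) :
    IsOpen {F : PrimeClosedFilter X | H ∉ F.sets} :=
  TopologicalSpace.isOpen_generateFrom_of_mem ⟨H, hH, rfl⟩

theorem PrimeOpenFilter.continuous_toClosed :
    Continuous (PrimeOpenFilter.toClosed : PrimeOpenFilter X → PrimeClosedFilter X) := by
  refine continuous_generateFrom_iff.2 ?_
  rintro _ ⟨H, hH, rfl⟩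
  have preimage_eq : PrimeOpenFilter.toClosed ⁻¹' {F | H ∈ F.sets}ᶜ = {G | Hᶜ ∈ G.sets} :=
    Set.ext fun _ => notMem_complDual_iff hH
  exact preimage_eq ▸ PrimeOpenFilter.isOpen_setOf_mem hH.isOpen_compl

theorem PrimeClosedFilter.continuous_toOpen :
    Continuous (PrimeClosedFilter.toOpen : PrimeClosedFilter X → PrimeOpenFilter X) := by
  refine continuous_generateFrom_iff.2 ?_
  rintro _ ⟨O, hO, rfl⟩
  have preimage_eq : PrimeClosedFilter.toOpen ⁻¹' {G | O ∈ G} = {F | Oᶜ ∉ F.sets} :=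
    Set.ext fun _ => mem_complDual_iff hO
  exact preimage_eq ▸ PrimeClosedFilter.isOpen_setOf_notMem hO.isClosed_compl

/-- `Φ` as a homeomorphism `ΣX ≃ₜ 𝔓X`. -/
def PrimeOpenFilter.homeomorphPrimeClosedFilter (X : Type*) [TopologicalSpace X] :
    PrimeOpenFilter X ≃ₜ PrimeClosedFilter X where
  toFun := PrimeOpenFilter.toClosed
  invFun := PrimeClosedFilter.toOpen
  left_inv := PrimeOpenFilter.toOpen_toClosed
  right_inv := PrimeClosedFilter.toClosed_toOpen
  continuous_toFun := PrimeOpenFilter.continuous_toClosed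
  continuous_invFun := PrimeClosedFilter.continuous_toOpen

end PrimeFilterSpaces

/-- `Φ(𝒢) = {C closed | X \ C ∉ 𝒢}` is a well-defined map `ΣX → 𝔓X` and is
a homeomorphism, with inverse `𝓕 ↦ {O open | X \ O ∉ 𝓕}`. -/
theorem stmt16 {X : Type u} [TopologicalSpace X] :
    (∀ G : PrimeOpenFilter X, ∃ F : PrimeClosedFilter X,
      F.sets = {C : Set X | IsClosed C ∧ Cᶜ ∉ G.sets}) ∧
    (∀ Φ : PrimeOpenFilter X → PrimeClosedFilter X,
      (∀ G : PrimeOpenFilter X, (Φ G).sets = {C : Set X | IsClosed C ∧ Cᶜ ∉ G.sets}) →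
      ∃ e : PrimeOpenFilter X ≃ₜ PrimeClosedFilter X,
        (⇑e = Φ) ∧
        ∀ F : PrimeClosedFilter X,
          (e.symm F).sets = {O : Set X | IsOpen O ∧ Oᶜ ∉ F.sets}) := by
  refine ⟨fun G => ⟨G.toClosed, rfl⟩, fun Φ hΦ => ?_⟩
  have toClosed_eq : PrimeOpenFilter.toClosed = Φ :=
    funext fun G => PrimeClosedFilter.ext (hΦ G).symm
  exact ⟨PrimeOpenFilter.homeomorphPrimeClosedFilter X, toClosed_eq, fun _ => rfl⟩
end
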